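/- For the unweighted three-dimensional step set S = {(1,0,-1), (-1,0,-1), (0,1,-1), (0,-1,-1), (1,1,1), (-1,1,1), (1,-1,1), (-1,-1,1)}, the number s_n of walks of length n taking steps in S, starting at the origin, and remaining in ℕ^3 satisfies s_n = (8^n / n^{3/2}) · ( 8√2/(3π^{3/2}) − 8/(9π√n) + O(1/n) ) as n → ∞. -/

import Mathlib

open Finset Filter
open scoped Classical Real

noncomputable section

/-- The number of walks of length `n` with steps in `S`, starting at the origin and
never leaving `ℕ^d` (all partial sums have nonnegative coordinates). -/
def numWalks (d : ℕ) (S : Finset (Fin d → ℤ)) (n : ℕ) : ℕ :=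
  Finset.card (Finset.univ.filter fun f : Fin n → {i // i ∈ S} =>
    ∀ m : ℕ, m ≤ n → ∀ j : Fin d,
      0 ≤ ∑ k ∈ Finset.univ.filter (fun k : Fin n => (k : ℕ) < m), ((f k : Fin d → ℤ) j))

/-- Total weight of walks of length `n` with steps in `S` (weighted by `w`),
starting at the origin and never leaving `ℕ^d`. -/
def walkWeight (d : ℕ) (S : Finset (Fin d → ℤ)) (w : (Fin d → ℤ) → ℝ) (n : ℕ) : ℝ :=
  ∑ f : Fin n → {i // i ∈ S},
    if ∀ m : ℕ, m ≤ n → ∀ j : Fin d,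
        0 ≤ ∑ k ∈ Finset.univ.filter (fun k : Fin n => (k : ℕ) < m), ((f k : Fin d → ℤ) j)
    then ∏ k : Fin n, w (f k) else 0


/-- half-line transfer operator -/
def hE (F : ℤ → ℝ) : ℕ → ℤ → ℝ
  | 0, z => if 0 ≤ z then F z else 0
  | n + 1, z => if 0 ≤ z then hE F n (z + 1) + hE F n (z - 1) else 0

lemma hE_neg (F : ℤ → ℝ) (n : ℕ) (z : ℤ) (hz : z < 0) : hE F n z = 0 := by
  cases n <;> simp [hE, not_le.mpr hz]

lemma hE_succ (F : ℤ → ℝ) (n : ℕ) (z : ℤ) (hz : 0 ≤ z) :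
    hE F (n + 1) z = hE F n (z + 1) + hE F n (z - 1) := by
  simp [hE, hz]

lemma hE_lin (F G : ℤ → ℝ) (a b : ℝ) (n : ℕ) : ∀ z : ℤ,
    hE (fun z => a * F z + b * G z) n z = a * hE F n z + b * hE G n z := by
  induction n with
  | zero => intro z; simp only [hE]; split_ifs <;> ring
  | succ n ih => intro z; simp only [hE, ih]; split_ifs <;> ring

lemma hE_succ' (F : ℤ → ℝ) (hF : F (-1) = 0) (n : ℕ) : ∀ z : ℤ,
    hE F (n + 1) z = hE (fun z => F (z + 1) + F (z - 1)) n z := by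
  induction n with
  | zero =>
    intro z
    by_cases hz : 0 ≤ z
    · rw [hE_succ _ _ _ hz]
      simp only [hE, hz, if_true, show (0:ℤ) ≤ z + 1 by omega]
      by_cases h1 : 0 ≤ z - 1
      · rw [if_pos h1]
      · have : z - 1 = -1 := by omega
        simp [this, hF]
    · rw [hE_neg _ _ _ (by omega), hE_neg _ _ _ (by omega)]
  | succ n ih =>
    intro z
    by_cases hz : 0 ≤ z
    · rw [hE_succ _ _ _ hz, hE_succ _ _ _ hz, ih, ih]
    · rw [hE_neg _ _ _ (by omega), hE_neg _ _ _ (by omega)]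

/-- half-line counts -/
def hh (n : ℕ) (z : ℤ) : ℝ := hE (fun _ => 1) n z

lemma hE_first (n : ℕ) : ∀ z : ℤ, -1 ≤ z → hE (fun z => (z : ℝ) + 1) n z = 2 ^ n * (z + 1) := by
  induction n with
  | zero =>
    intro z hz
    by_cases h : 0 ≤ z
    · simp [hE, h]
    · have : z = -1 := by omega
      subst this; simp [hE]
  | succ n ih =>
    intro z hz
    by_cases h : 0 ≤ z
    · rw [hE_succ _ _ _ h, ih _ (by omega), ih _ (by omega)]; push_cast; ring
    · have : z = -1 := by omega
      subst this; simp [hE]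

lemma hE_second (n : ℕ) (z : ℤ) : hE (fun z => ((z : ℝ) + 1) ^ 2) (n + 1) z =
    2 * hE (fun z => ((z : ℝ) + 1) ^ 2) n z + 2 * hh n z := by
  rw [hE_succ' _ (by norm_num), hh, ← hE_lin]
  congr 1
  funext z
  push_cast; ring

lemma hh_formula (m : ℕ) : ∀ x : ℕ,
    hh m x = ∑ t ∈ range (x + 1), (Nat.choose m ((m + t + 1) / 2) : ℝ) := by
  induction m with
  | zero =>
    intro x
    rw [sum_range_succ', sum_eq_zero]
    · simp [hh, hE]
    · intro i _
      rw [Nat.choose_eq_zero_of_lt (by omega)]; simp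
  | succ m ih =>
    intro x
    have key : ∀ t, (Nat.choose (m + 1) ((m + 1 + t + 1) / 2) : ℝ) =
        Nat.choose m ((m + t) / 2) + Nat.choose m ((m + (t + 1) + 1) / 2) := by
      intro t
      rw [show (m + 1 + t + 1) / 2 = (m + t) / 2 + 1 by omega,
        show (m + (t + 1) + 1) / 2 = (m + t) / 2 + 1 by omega, Nat.choose_succ_succ]
      push_cast; ring
    have h0 : (Nat.choose m (m / 2) : ℝ) = Nat.choose m ((m + 1) / 2) := by
      rw [← Nat.choose_symm (show m / 2 ≤ m by omega)]
      congr 2; omega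
    have hs : hh (m + 1) x = hh m ((x : ℤ) + 1) + hh m ((x : ℤ) - 1) :=
      hE_succ _ _ _ (by positivity)
    rw [hs, sum_congr rfl (fun t _ => key t), sum_add_distrib]
    have h1 := ih (x + 1)
    push_cast at h1
    rw [h1, sum_range_succ' _ (x + 1)]
    rw [sum_range_succ' (fun t => (Nat.choose m ((m + t) / 2) : ℝ)) x]
    simp only [add_zero, h0]
    have h2 : hh m ((x : ℤ) - 1) = ∑ t ∈ range x, (Nat.choose m ((m + (t + 1)) / 2) : ℝ) := by
      cases x with
      | zero => simp [hh, hE_neg]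
      | succ x =>
        have := ih x
        push_cast
        rw [add_sub_cancel_right, this]
        rfl
    rw [h2]; ring

/-- counts from the origin -/
def uu (n : ℕ) : ℝ := hh n 0

lemma uu_eq (m : ℕ) : uu m = Nat.choose m ((m + 1) / 2) := by
  have := hh_formula m 0
  simpa [uu] using this

lemma uu_even (k : ℕ) : uu (2 * k) = Nat.centralBinom k := by
  rw [uu_eq, Nat.centralBinom]
  congr 2; omega

lemma uu_odd (k : ℕ) : 2 * uu (2 * k + 1) = Nat.centralBinom (k + 1) := by
  rw [uu_eq, Nat.centralBinom, show 2 * (k + 1) = (2 * k + 1) + 1 by ring, Nat.choose_succ_succ,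
    ← Nat.choose_symm (show k ≤ 2 * k + 1 by omega), show (2 * k + 1 + 1) / 2 = k + 1 by omega,
    show 2 * k + 1 - k = k + 1 by omega]
  push_cast; ring

lemma cb_W (k : ℕ) : Real.Wallis.W k * ((Nat.centralBinom k : ℝ) ^ 2 * (2 * k + 1)) = 16 ^ k := by
  rw [Real.Wallis.W_eq_factorial_ratio]
  have h1 : (Nat.centralBinom k : ℝ) * (k.factorial : ℝ) * k.factorial = (2 * k).factorial := by
    have := Nat.choose_mul_factorial_mul_factorial (show k ≤ 2 * k by omega)
    rw [show 2 * k - k = k by omega] at this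
    exact_mod_cast this
  have h2 : ((2 * k).factorial : ℝ) ≠ 0 := by positivity
  rw [div_mul_eq_mul_div, div_eq_iff (by positivity), ← h1, pow_mul]
  norm_num
  ring

lemma cb_hi (k : ℕ) : (Nat.centralBinom k : ℝ) ^ 2 * (π * (2 * k + 1) ^ 2) ≤ 16 ^ k * (2 * (2 * k + 2)) := by
  have h := Real.Wallis.le_W k
  have h3 := mul_le_mul_of_nonneg_right h
    (show (0:ℝ) ≤ (Nat.centralBinom k : ℝ) ^ 2 * (2 * k + 1) by positivity)
  rw [cb_W] at h3
  have h4 := mul_le_mul_of_nonneg_right h3 (show (0:ℝ) ≤ 2 * (2 * k + 2) by positivity)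
  refine le_trans (le_of_eq ?_) h4
  field_simp

lemma cb_lo (k : ℕ) : 16 ^ k * 2 ≤ (Nat.centralBinom k : ℝ) ^ 2 * (π * (2 * k + 1)) := by
  have h := Real.Wallis.W_le k
  have h3 := mul_le_mul_of_nonneg_right h
    (show (0:ℝ) ≤ (Nat.centralBinom k : ℝ) ^ 2 * (2 * k + 1) by positivity)
  rw [cb_W] at h3
  linarith

lemma uu_hi (m : ℕ) : uu m ^ 2 * (π * m) ≤ 4 ^ m * 2 := by
  have hp := Real.pi_pos
  rcases Nat.even_or_odd' m with ⟨k, rfl | rfl⟩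
  · rw [uu_even, pow_mul]
    have h := cb_hi k
    norm_num at h ⊢
    set c := (Nat.centralBinom k : ℝ) ^ 2 * π
    have hc : (0:ℝ) ≤ c := by positivity
    have h5 : (2 * (k:ℝ)) * (2 * k + 2) ≤ (2 * k + 1) ^ 2 := by nlinarith
    have h6 : c * (2 * k) * (2 * k + 2) ≤ 16 ^ k * 2 * (2 * k + 2) := by
      calc _ = c * ((2 * (k:ℝ)) * (2 * k + 2)) := by ring
        _ ≤ c * (2 * k + 1) ^ 2 := by gcongr
        _ ≤ _ := by simp only [c]; linarith
    have h7 := le_of_mul_le_mul_right h6 (by positivity)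
    simp only [c] at h7; linarith
  · have h := cb_hi (k + 1)
    rw [← uu_odd] at h
    push_cast at h ⊢
    rw [pow_succ (4:ℝ), pow_mul]
    rw [pow_succ (16:ℝ)] at h
    norm_num at h ⊢
    set c := uu (2 * k + 1) ^ 2 * π with hcd
    have hc : (0:ℝ) ≤ c := by positivity
    have h5 : (2 * (k:ℝ) + 1) * (2 * k + 4) ≤ (2 * k + 3) ^ 2 := by nlinarith
    have h6 : c * (2 * k + 1) * (2 * k + 4) ≤ 16 ^ k * 4 * 2 * (2 * k + 4) := by
      calc _ = c * ((2 * (k:ℝ) + 1) * (2 * k + 4)) := by ring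
        _ ≤ c * (2 * k + 3) ^ 2 := by gcongr
        _ ≤ _ := by rw [hcd]; linarith
    have h7 := le_of_mul_le_mul_right h6 (by positivity)
    rw [hcd] at h7; linarith

lemma uu_lo (m : ℕ) : 4 ^ m * 2 ≤ uu m ^ 2 * (π * (m + 2)) := by
  have hp := Real.pi_pos
  rcases Nat.even_or_odd' m with ⟨k, rfl | rfl⟩
  · rw [uu_even, pow_mul]
    have h := cb_lo k
    norm_num at h ⊢
    have : (0:ℝ) ≤ (Nat.centralBinom k : ℝ) ^ 2 * π := by positivity
    nlinarith
  · have h := cb_lo (k + 1)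
    rw [← uu_odd] at h
    push_cast at h ⊢
    rw [pow_succ, pow_mul]
    rw [pow_succ] at h
    norm_num at h ⊢
    linarith

lemma uu_pos (m : ℕ) : 0 < uu m := by
  rw [uu_eq]; exact_mod_cast Nat.choose_pos (by omega)

/-- distributing simple steps -/
def RR (f : ℕ → ℕ → ℝ) : ℕ → ℕ → ℕ → ℝ
  | 0, i, j => f i j
  | b + 1, i, j => RR f b (i + 1) j + RR f b i (j + 1)

lemma RR_lo (f : ℕ → ℕ → ℝ) (α : ℝ) (N : ℕ) (hf : ∀ i j, i + j = N → α ≤ f i j) (b : ℕ) :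
    ∀ i j, i + j + b = N → 2 ^ b * α ≤ RR f b i j := by
  induction b with
  | zero => intro i j h; simpa [RR] using hf i j h
  | succ b ih =>
    intro i j h
    have h1 := ih (i + 1) j (by omega)
    have h2 := ih i (j + 1) (by omega)
    simp only [RR]; rw [pow_succ]; linarith

lemma RR_hi (f : ℕ → ℕ → ℝ) (α β : ℝ) (a N : ℕ)
    (hf : ∀ i j, a ≤ i → a ≤ j → i + j = N → f i j ≤ α + β * ((i : ℝ) - j) ^ 2) (b : ℕ) :
    ∀ i j, a ≤ i → a ≤ j → i + j + b = N →
      RR f b i j ≤ 2 ^ b * (α + β * (((i : ℝ) - j) ^ 2 + b)) := by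
  induction b with
  | zero => intro i j hi hj h; simpa [RR] using hf i j hi hj h
  | succ b ih =>
    intro i j hi hj h
    have h1 := ih (i + 1) j (by omega) hj (by omega)
    have h2 := ih i (j + 1) hi (by omega) (by omega)
    simp only [RR]; rw [pow_succ]
    push_cast at h1 h2 ⊢
    refine (add_le_add h1 h2).trans (le_of_eq ?_)
    ring

/-- quarter-plane counts -/
def QQ (x y : ℤ) (a b : ℕ) : ℝ := RR (fun i j => hh i x * hh j y) b a a

lemma RR_add (f g : ℕ → ℕ → ℝ) (b : ℕ) : ∀ i j,
    RR (fun i j => f i j + g i j) b i j = RR f b i j + RR g b i j := by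
  induction b with
  | zero => intro i j; rfl
  | succ b ih => intro i j; simp only [RR, ih]; ring

lemma RR_shift (f g : ℕ → ℕ → ℝ) (p q : ℕ) (h : ∀ i j, f i j = g (i + p) (j + q)) (b : ℕ) : ∀ i j,
    RR f b i j = RR g b (i + p) (j + q) := by
  induction b with
  | zero => intro i j; exact h i j
  | succ b ih =>
    intro i j; simp only [RR, ih]
    rw [add_right_comm i, add_right_comm j]

lemma hh_succ (m : ℕ) (x : ℤ) (hx : 0 ≤ x) : hh (m + 1) x = hh m (x + 1) + hh m (x - 1) :=
  hE_succ _ _ _ hx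

lemma QQ_up (x y : ℤ) (hx : 0 ≤ x) (hy : 0 ≤ y) (a b : ℕ) :
    QQ (x + 1) (y + 1) a b + QQ (x - 1) (y + 1) a b + QQ (x + 1) (y - 1) a b
      + QQ (x - 1) (y - 1) a b = QQ x y (a + 1) b := by
  unfold QQ
  rw [← RR_add, ← RR_add, ← RR_add]
  apply RR_shift _ _ 1 1
  intro i j
  rw [hh_succ _ _ hx, hh_succ _ _ hy]; ring

lemma QQ_down (x y : ℤ) (hx : 0 ≤ x) (hy : 0 ≤ y) (a b : ℕ) :
    QQ (x + 1) y a b + QQ (x - 1) y a b + QQ x (y + 1) a b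
      + QQ x (y - 1) a b = QQ x y a (b + 1) := by
  unfold QQ
  rw [← RR_add, add_assoc, ← RR_add]
  rw [RR]
  congr 1
  · apply RR_shift _ _ 1 0
    intro i j
    rw [hh_succ _ _ hx, add_zero]; ring
  · apply RR_shift _ _ 0 1
    intro i j
    rw [hh_succ _ _ hy, add_zero]; ring

lemma QQ_neg (x y : ℤ) (h : x < 0 ∨ y < 0) (a b : ℕ) : QQ x y a b = 0 := by
  have : (fun i j => hh i x * hh j y) = fun _ _ => (0:ℝ) := by
    funext i j
    rcases h with h | h
    · simp [hh, hE_neg _ _ _ h]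
    · simp [hh, hE_neg _ _ _ h]
  rw [QQ, this]
  have : ∀ b i j, RR (fun _ _ => (0:ℝ)) b i j = 0 := by
    intro b
    induction b with
    | zero => intros; rfl
    | succ b ih => intro i j; simp [RR, ih]
  exact this _ _ _

/-- sum over z-words -/
def WW (G : ℕ → ℕ → ℝ) : ℕ → ℤ → ℕ → ℕ → ℝ
  | 0, z, a, b => if 0 ≤ z then G a b else 0
  | n + 1, z, a, b => if 0 ≤ z then WW G n (z + 1) (a + 1) b + WW G n (z - 1) a (b + 1) else 0

lemma WW_four (G G1 G2 G3 G4 : ℕ → ℕ → ℝ) (p q : ℕ)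
    (h : ∀ a b, G1 a b + G2 a b + G3 a b + G4 a b = G (a + p) (b + q)) (n : ℕ) : ∀ z a b,
    WW G1 n z a b + WW G2 n z a b + WW G3 n z a b + WW G4 n z a b = WW G n z (a + p) (b + q) := by
  induction n with
  | zero => intro z a b; simp only [WW]; split_ifs <;> simp [h]
  | succ n ih =>
    intro z a b
    simp only [WW]
    rw [add_right_comm a p, add_right_comm b q, ← ih, ← ih]
    split_ifs <;> ring

lemma WW_neg (G : ℕ → ℕ → ℝ) (n : ℕ) (z : ℤ) (hz : z < 0) (a b : ℕ) : WW G n z a b = 0 := by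
  cases n <;> simp [WW, not_le.mpr hz]

lemma WW_zero (G : ℕ → ℕ → ℝ) (hG : ∀ a b, G a b = 0) (n : ℕ) : ∀ z a b, WW G n z a b = 0 := by
  induction n with
  | zero => intros; simp [WW, hG]
  | succ n ih => intros; simp [WW, ih]

lemma WW_le (G : ℕ → ℕ → ℝ) (F : ℤ → ℝ) (N : ℕ)
    (hG : ∀ a b : ℕ, a + b = N → b ≤ a → G a b ≤ F ((a : ℤ) - b)) (n : ℕ) :
    ∀ (z : ℤ) (a b : ℕ), z = a - b → n + a + b = N → WW G n z a b ≤ hE F n z := by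
  induction n with
  | zero =>
    intro z a b hz h
    simp only [WW, hE]
    split_ifs with h0
    · rw [hz]; exact hG a b (by omega) (by omega)
    · exact le_rfl
  | succ n ih =>
    intro z a b hz h
    simp only [WW, hE]
    split_ifs with h0
    · exact add_le_add (ih _ _ _ (by push_cast; omega) (by omega))
        (ih _ _ _ (by push_cast; omega) (by omega))
    · exact le_rfl

lemma WW_ge (G : ℕ → ℕ → ℝ) (F : ℤ → ℝ) (N : ℕ)
    (hG : ∀ a b : ℕ, a + b = N → b ≤ a → F ((a : ℤ) - b) ≤ G a b) (n : ℕ) :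
    ∀ (z : ℤ) (a b : ℕ), z = a - b → n + a + b = N → hE F n z ≤ WW G n z a b := by
  induction n with
  | zero =>
    intro z a b hz h
    simp only [WW, hE]
    split_ifs with h0
    · rw [hz]; exact hG a b (by omega) (by omega)
    · exact le_rfl
  | succ n ih =>
    intro z a b hz h
    simp only [WW, hE]
    split_ifs with h0
    · exact add_le_add (ih _ _ _ (by push_cast; omega) (by omega))
        (ih _ _ _ (by push_cast; omega) (by omega))
    · exact le_rfl

/-- walks from an arbitrary starting point -/
def cnt (S : Finset (Fin 3 → ℤ)) (n : ℕ) (p : Fin 3 → ℤ) : ℕ :=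
  Finset.card (Finset.univ.filter fun f : Fin n → {i // i ∈ S} =>
    ∀ m : ℕ, m ≤ n → ∀ j : Fin 3,
      0 ≤ p j + ∑ k ∈ Finset.univ.filter (fun k : Fin n => (k : ℕ) < m), ((f k : Fin 3 → ℤ) j))

lemma cnt_zero_start (S : Finset (Fin 3 → ℤ)) (n : ℕ) : numWalks 3 S n = cnt S n 0 := by
  simp [numWalks, cnt]

lemma cnt_zero (S : Finset (Fin 3 → ℤ)) (p : Fin 3 → ℤ) :
    cnt S 0 p = if ∀ j, 0 ≤ p j then 1 else 0 := by
  simp only [cnt, Finset.univ_eq_empty, Finset.filter_empty, Finset.sum_empty, add_zero]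
  split_ifs with h
  · rw [Finset.filter_true_of_mem (fun f _ m _ j => h j)]; simp
  · rw [Finset.filter_false_of_mem (fun f _ hf => h (hf 0 le_rfl))]; simp

lemma cnt_succ (S : Finset (Fin 3 → ℤ)) (n : ℕ) (p : Fin 3 → ℤ) :
    cnt S (n + 1) p = if ∀ j, 0 ≤ p j then ∑ s ∈ S, cnt S n (p + s) else 0 := by
  split_ifs with h
  · rw [← Finset.sum_coe_sort S (fun s => cnt S n (p + s))]
    simp only [cnt, Finset.card_filter]
    rw [← (Fin.consEquiv (fun _ : Fin (n + 1) => {i // i ∈ S})).sum_comp, Fintype.sum_prod_type]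
    refine Finset.sum_congr rfl fun s _ => Finset.sum_congr rfl fun f _ => ?_
    congr 1
    have key : ∀ m j, ∑ k ∈ Finset.univ.filter (fun k : Fin (n + 1) => (k : ℕ) < m + 1),
        (((Fin.consEquiv (fun _ : Fin (n + 1) => {i // i ∈ S})) (s, f) k : Fin 3 → ℤ) j)
        = (s : Fin 3 → ℤ) j + ∑ k ∈ Finset.univ.filter (fun k : Fin n => (k : ℕ) < m),
          ((f k : Fin 3 → ℤ) j) := by
      intro m j
      rw [Finset.sum_filter, Fin.sum_univ_succ, Finset.sum_filter]
      simp [Fin.consEquiv]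
    apply propext
    constructor
    · intro H m hm j
      have := H (m + 1) (by omega) j
      rw [key] at this
      simpa [add_assoc] using this
    · intro H m hm j
      cases m with
      | zero => simpa using h j
      | succ m =>
        rw [key]
        have := H m (by omega) j
        simpa [add_assoc] using this
  · rw [cnt, Finset.filter_false_of_mem]
    · simp
    · intro f _ hf
      apply h
      intro j
      simpa using hf 0 (by omega) j

/-- the step set -/
def SS : Finset (Fin 3 → ℤ) := {![1, 0, -1], ![-1, 0, -1], ![0, 1, -1], ![0, -1, -1],
            ![1, 1, 1], ![-1, 1, 1], ![1, -1, 1], ![-1, -1, 1]}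

lemma sum_SS (g : (Fin 3 → ℤ) → ℕ) : ∑ s ∈ SS, g s =
    (g ![1, 1, 1] + g ![-1, 1, 1] + g ![1, -1, 1] + g ![-1, -1, 1]) +
    (g ![1, 0, -1] + g ![-1, 0, -1] + g ![0, 1, -1] + g ![0, -1, -1]) := by
  unfold SS
  repeat rw [Finset.sum_insert (by decide)]
  rw [Finset.sum_singleton]
  ring

lemma cnt_eq (n : ℕ) : ∀ x y z : ℤ, (cnt SS n ![x, y, z] : ℝ) = WW (QQ x y) n z 0 0 := by
  induction n with
  | zero =>
    intro x y z
    rw [cnt_zero]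
    simp only [WW, QQ, RR, hh, hE, Fin.forall_fin_succ]
    by_cases hx : 0 ≤ x <;> by_cases hy : 0 ≤ y <;> by_cases hz : 0 ≤ z <;> simp [hx, hy, hz]
  | succ n ih =>
    intro x y z
    rw [cnt_succ]
    by_cases h : 0 ≤ x ∧ 0 ≤ y ∧ 0 ≤ z
    · obtain ⟨hx, hy, hz⟩ := h
      rw [if_pos (by simp [Fin.forall_fin_succ, hx, hy, hz]), sum_SS]
      simp only [Matrix.cons_add_cons, Matrix.empty_add_empty, add_zero]
      push_cast
      simp only [ih, ← sub_eq_add_neg]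
      rw [WW_four _ _ _ _ _ 1 0 (fun a b => QQ_up x y hx hy a b),
        WW_four _ _ _ _ _ 0 1 (fun a b => QQ_down x y hx hy a b)]
      simp [WW, hz]
    · rw [if_neg (by simpa [Fin.forall_fin_succ] using h)]
      by_cases hz : z < 0
      · simp [WW_neg _ _ _ hz]
      · rw [WW_zero _ (fun a b => QQ_neg x y (by omega) a b)]; simp

lemma numWalks_eq (n : ℕ) : (numWalks 3 SS n : ℝ) = WW (QQ 0 0) n 0 0 0 := by
  rw [cnt_zero_start, ← cnt_eq]
  congr 2
  ext i; fin_cases i <;> rfl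

lemma prod_lo (i j : ℕ) : (2:ℝ) ^ (i + j) * (4 / (π * ((i + j : ℕ) + 4))) ≤ uu i * uu j := by
  have hp := Real.pi_pos
  have h1 := uu_lo i
  have h2 := uu_lo j
  have p1 := uu_pos i
  have p2 := uu_pos j
  rw [← pow_le_pow_iff_left₀ (by positivity) (by positivity) two_ne_zero]
  have h3 : (4:ℝ) ^ i * 2 * (4 ^ j * 2) ≤ uu i ^ 2 * (π * (i + 2)) * (uu j ^ 2 * (π * (j + 2))) := by
    gcongr
  have e : ((2:ℝ) ^ (i + j)) ^ 2 = 4 ^ i * 4 ^ j := by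
    rw [← pow_mul, mul_comm, pow_mul, pow_add]; norm_num
  rw [mul_pow, e, div_pow, mul_div_assoc', div_le_iff₀ (by positivity)]
  push_cast
  have h4 : ((i:ℝ) + 2) * (j + 2) * 4 ≤ (i + j + 4) ^ 2 := by nlinarith [sq_nonneg ((i:ℝ) - j)]
  calc (4:ℝ) ^ i * 4 ^ j * 4 ^ 2 = 4 * (4 ^ i * 2 * (4 ^ j * 2)) := by ring
    _ ≤ 4 * (uu i ^ 2 * (π * (i + 2)) * (uu j ^ 2 * (π * (j + 2)))) := by gcongr
    _ = uu i ^ 2 * uu j ^ 2 * π ^ 2 * (((i:ℝ) + 2) * (j + 2) * 4) := by ring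
    _ ≤ uu i ^ 2 * uu j ^ 2 * π ^ 2 * (i + j + 4) ^ 2 := by gcongr
    _ = _ := by ring

lemma prod_hi (i j : ℕ) (hi : 1 ≤ i) (hj : 1 ≤ j)
    (hd : 2 * ((i:ℝ) - j) ^ 2 ≤ ((i + j : ℕ) : ℝ) ^ 2) :
    uu i * uu j ≤ (2:ℝ) ^ (i + j) * (4 / (π * (i + j : ℕ))) *
      (1 + ((i:ℝ) - j) ^ 2 / ((i + j : ℕ) : ℝ) ^ 2) := by
  have hp := Real.pi_pos
  have h1 := uu_hi i
  have h2 := uu_hi j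
  have p1 := uu_pos i
  have p2 := uu_pos j
  have hi' : (0:ℝ) < i := by exact_mod_cast hi
  have hj' : (0:ℝ) < j := by exact_mod_cast hj
  rw [← pow_le_pow_iff_left₀ (by positivity) (by positivity) two_ne_zero]
  have h3 : uu i ^ 2 * (π * i) * (uu j ^ 2 * (π * j)) ≤ (4:ℝ) ^ i * 2 * (4 ^ j * 2) := by
    gcongr
  have e : ((2:ℝ) ^ (i + j)) ^ 2 = 4 ^ i * 4 ^ j := by
    rw [← pow_mul, mul_comm, pow_mul, pow_add]; norm_num
  push_cast at hd ⊢
  set s : ℝ := (i:ℝ) + j with hs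
  have hs0 : 0 < s := by positivity
  set t : ℝ := ((i:ℝ) - j) ^ 2 / s ^ 2 with ht
  have ht0 : 0 ≤ t := by positivity
  have ht1 : t ≤ 1 / 2 := by rw [ht, div_le_iff₀ (by positivity)]; linarith
  have hij : 4 * ((i:ℝ) * j) = s ^ 2 * (1 - t) := by
    rw [ht]; field_simp; rw [hs]; ring
  have h5 : 1 ≤ (1 - t) * (1 + t) ^ 2 := by nlinarith [mul_nonneg ht0 ht0]
  rw [mul_pow, mul_pow, mul_pow, e, div_pow]
  have h6 : uu i ^ 2 * uu j ^ 2 * (π ^ 2 * (s ^ 2 * (1 - t))) ≤ 16 * (4 ^ i * 4 ^ j) := by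
    rw [← hij]; linarith
  have h7 : uu i ^ 2 * uu j ^ 2 * (π ^ 2 * s ^ 2) ≤ 16 * (4 ^ i * 4 ^ j) * (1 + t) ^ 2 := by
    calc _ = uu i ^ 2 * uu j ^ 2 * (π ^ 2 * s ^ 2) * 1 := by ring
      _ ≤ uu i ^ 2 * uu j ^ 2 * (π ^ 2 * s ^ 2) * ((1 - t) * (1 + t) ^ 2) := by gcongr
      _ = uu i ^ 2 * uu j ^ 2 * (π ^ 2 * (s ^ 2 * (1 - t))) * (1 + t) ^ 2 := by ring
      _ ≤ _ := by gcongr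
  rw [mul_div_assoc', div_mul_eq_mul_div, le_div_iff₀ (by positivity)]
  linarith

lemma pow_aux (a b : ℕ) : (2:ℝ) ^ b * 2 ^ (2 * a + b) = 4 ^ (a + b) := by
  rw [show (4:ℝ) = 2 ^ 2 by norm_num, ← pow_mul, ← pow_add]; congr 1; ring

lemma QQ_lo (a b : ℕ) : (4:ℝ) ^ (a + b) * (4 / (π * (2 * a + b + 4))) ≤ QQ 0 0 a b := by
  have h := RR_lo (fun i j => hh i 0 * hh j 0) (2 ^ (2 * a + b) * (4 / (π * ((2 * a + b : ℕ) + 4))))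
    (2 * a + b) (fun i j h => by rw [← h]; exact prod_lo i j) b a a (by ring)
  rw [← mul_assoc, pow_aux] at h
  push_cast at h
  exact h

lemma QQ_hi (a b : ℕ) (ha : 1 ≤ a) (hab : b ≤ a) :
    QQ 0 0 a b ≤ (4:ℝ) ^ (a + b) * (4 / (π * (2 * a + b))) * (1 + 1 / (a + b)) := by
  have hp := Real.pi_pos
  have ha' : (1:ℝ) ≤ a := by exact_mod_cast ha
  have hab' : (b:ℝ) ≤ a := by exact_mod_cast hab
  have hb' : (0:ℝ) ≤ b := by positivity
  set c : ℝ := 2 ^ (2 * a + b) * (4 / (π * (2 * a + b : ℕ))) with hc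
  have hc0 : 0 ≤ c := by positivity
  have h := RR_hi (fun i j => hh i 0 * hh j 0) c (c / ((2 * a + b : ℕ) : ℝ) ^ 2) a
    (2 * a + b) (fun i j hi hj h => by
      have hi' : (a:ℝ) ≤ i := by exact_mod_cast hi
      have hj' : (a:ℝ) ≤ j := by exact_mod_cast hj
      have hs' : (i:ℝ) + j = 2 * a + b := by exact_mod_cast h
      have := prod_hi i j (by omega) (by omega) (by
        push_cast
        have h1 : ((i:ℝ) - j) ^ 2 ≤ b ^ 2 := by
          apply sq_le_sq'
          · linarith
          · linarith
        rw [hs']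
        nlinarith)
      rw [h] at this
      refine this.trans (le_of_eq ?_)
      rw [hc]; ring) b a a le_rfl le_rfl (by ring)
  refine h.trans ?_
  have e : (4:ℝ) ^ (a + b) * (4 / (π * (2 * a + b))) = 2 ^ b * c := by
    rw [hc, ← mul_assoc, pow_aux]; push_cast; rfl
  rw [e, mul_assoc]
  gcongr
  have h2 : (b:ℝ) / (2 * a + b) ^ 2 ≤ 1 / (a + b) := by
    rw [div_le_div_iff₀ (by positivity) (by positivity)]
    nlinarith
  push_cast
  calc _ = c * (1 + b / (2 * a + b) ^ 2) := by ring
    _ ≤ _ := by gcongr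

lemma QQ_lo' (n a b : ℕ) (hn : 1 ≤ n) (h : a + b = n) (hab : b ≤ a) :
    (4:ℝ) ^ n * (8 / (3 * π * n)) * ((1 - 7 / (3 * n)) * 1 + (-1 / (3 * n)) * ((((a:ℤ) - b : ℤ) : ℝ) + 1))
      ≤ QQ 0 0 a b := by
  have hp := Real.pi_pos
  have hn' : (1:ℝ) ≤ n := by exact_mod_cast hn
  have hab' : (b:ℝ) ≤ a := by exact_mod_cast hab
  have h' : (a:ℝ) + b = n := by exact_mod_cast h
  refine le_trans ?_ (QQ_lo a b)
  rw [h, mul_assoc]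
  gcongr
  push_cast
  obtain ⟨d, hd⟩ : ∃ d : ℝ, d = (a:ℝ) - b := ⟨_, rfl⟩
  have hd0 : 0 ≤ d := by linarith
  have e : 2 * (a:ℝ) + b + 4 = (3 * n + d + 8) / 2 := by rw [hd, ← h']; ring
  rw [e, ← hd]
  have e2 : 4 / (π * ((3 * (n:ℝ) + d + 8) / 2)) = 8 / (3 * π * n) * (3 * n / (3 * n + d + 8)) := by
    field_simp; norm_num
  rw [e2]
  gcongr
  rw [le_div_iff₀ (by positivity)]
  have e3 : (1 - 7 / (3 * (n:ℝ))) * 1 + (-1 / (3 * n)) * (d + 1) = (3 * n - (d + 8)) / (3 * n) := by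
    field_simp; ring
  rw [e3, div_mul_eq_mul_div, div_le_iff₀ (by positivity)]
  nlinarith

lemma QQ_hi' (n a b : ℕ) (hn : 1 ≤ n) (h : a + b = n) (hab : b ≤ a) :
    QQ 0 0 a b ≤ (4:ℝ) ^ n * (8 / (3 * π * n)) * (1 + 1 / n) *
     (1 * ((1 + 1 / (3 * n)) * 1 + (-1 / (3 * n)) * ((((a:ℤ) - b : ℤ) : ℝ) + 1)) +
      (1 / (9 * n ^ 2)) * ((((a:ℤ) - b : ℤ) : ℝ) + 1) ^ 2) := by
  have hp := Real.pi_pos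
  have hn' : (1:ℝ) ≤ n := by exact_mod_cast hn
  have hab' : (b:ℝ) ≤ a := by exact_mod_cast hab
  have h' : (a:ℝ) + b = n := by exact_mod_cast h
  refine (QQ_hi a b (by omega) hab).trans ?_
  rw [h, h']
  push_cast
  obtain ⟨d, hd⟩ : ∃ d : ℝ, d = (a:ℝ) - b := ⟨_, rfl⟩
  have hd0 : 0 ≤ d := by linarith
  have e : 2 * (a:ℝ) + b = (3 * n + d) / 2 := by rw [hd, ← h']; ring
  rw [e, ← hd]
  have e2 : 4 / (π * ((3 * (n:ℝ) + d) / 2)) = 8 / (3 * π * n) * (3 * n / (3 * n + d)) := by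
    field_simp; norm_num
  rw [e2]
  have key : 3 * (n:ℝ) / (3 * n + d) ≤ 1 * ((1 + 1 / (3 * n)) * 1 + (-1 / (3 * n)) * (d + 1)) +
      (1 / (9 * n ^ 2)) * (d + 1) ^ 2 := by
    have e3 : 1 * ((1 + 1 / (3 * (n:ℝ))) * 1 + (-1 / (3 * n)) * (d + 1)) +
      (1 / (9 * n ^ 2)) * (d + 1) ^ 2 = (9 * n ^ 2 - 3 * n * d + (d + 1) ^ 2) / (9 * n ^ 2) := by
      field_simp; ring
    rw [e3, div_le_div_iff₀ (by positivity) (by positivity)]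
    have : 0 ≤ d ^ 3 := by positivity
    nlinarith [mul_nonneg hd0 hd0]
  calc _ = (4:ℝ) ^ n * (8 / (3 * π * n)) * (1 + 1 / n) * (3 * n / (3 * n + d)) := by ring
    _ ≤ _ := by gcongr

lemma second_le (n : ℕ) : hE (fun z => ((z : ℝ) + 1) ^ 2) n 0 ≤ 2 ^ n * (3 + 3 * √n) := by
  induction n with
  | zero => simp [hE]
  | succ n ih =>
    rw [hE_second]
    have hu : hh n 0 = uu n := rfl
    rw [hu]
    have key : uu n ≤ 2 ^ n * (3 * √(n + 1 : ℕ) - 3 * √n) := by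
      rcases Nat.eq_zero_or_pos n with rfl | hn
      · simp [uu, hh, hE]
      · have h := uu_hi n
        have hn' : (1:ℝ) ≤ n := by exact_mod_cast hn
        have hp := Real.pi_gt_three
        have hr := Real.sq_sqrt (show (0:ℝ) ≤ n by positivity)
        have hr2 := Real.sq_sqrt (show (0:ℝ) ≤ (n + 1 : ℕ) by positivity)
        set r := √(n:ℝ)
        set r' := √((n + 1 : ℕ):ℝ)
        have hr0 : 0 < r := by
          have : 0 ≤ r := Real.sqrt_nonneg _
          nlinarith
        have hr1 : 0 ≤ r' := Real.sqrt_nonneg _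
        push_cast at hr2
        have h1 : uu n * r ≤ 2 ^ n := by
          have p := uu_pos n
          rw [← pow_le_pow_iff_left₀ (by positivity) (by positivity) two_ne_zero, mul_pow, hr,
            ← pow_mul, mul_comm n 2, pow_mul]
          norm_num
          have : 0 ≤ uu n ^ 2 * n := by positivity
          nlinarith
        have h2 : r' ≤ 2 * r := by nlinarith
        have h3 : 1 ≤ (3 * r' - 3 * r) * r := by
          have h4 : (r' - r) * (r' + r) = 1 := by ring_nf; linarith
          have h5 : 0 ≤ r' - r := by
            by_contra hc
            nlinarith
          nlinarith
        have h6 : uu n * r ≤ 2 ^ n * (3 * r' - 3 * r) * r := by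
          calc _ ≤ (2:ℝ) ^ n * 1 := by linarith
            _ ≤ 2 ^ n * ((3 * r' - 3 * r) * r) := by gcongr
            _ = _ := by ring
        exact le_of_mul_le_mul_right h6 hr0
    rw [pow_succ]
    linarith

lemma hE_smul (F : ℤ → ℝ) (c : ℝ) (n : ℕ) (z : ℤ) :
    hE (fun z => c * F z) n z = c * hE F n z := by
  have := hE_lin F F c 0 n z
  simpa using this

lemma S_lo (n : ℕ) (hn : 1 ≤ n) :
    (4:ℝ) ^ n * (8 / (3 * π * n)) * ((1 - 7 / (3 * n)) * uu n + (-1 / (3 * n)) * 2 ^ n) ≤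
      (numWalks 3 SS n : ℝ) := by
  rw [numWalks_eq]
  refine le_trans (le_of_eq ?_) (WW_ge _ (fun z : ℤ => (4:ℝ) ^ n * (8 / (3 * π * n)) * ((1 - 7 / (3 * n)) * 1 +
      (-1 / (3 * n)) * ((z : ℝ) + 1))) n (fun a b h hab => QQ_lo' n a b hn h hab) n 0 0 0
    (by simp) (by simp))
  rw [hE_smul (fun z : ℤ => (1 - 7 / (3 * (n:ℝ))) * 1 + (-1 / (3 * n)) * ((z:ℝ) + 1)),
    hE_lin (fun _ => 1) (fun z : ℤ => (z:ℝ) + 1), hE_first _ _ (by norm_num)]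
  simp [uu, hh]

lemma S_hi (n : ℕ) (hn : 1 ≤ n) :
    (numWalks 3 SS n : ℝ) ≤ (4:ℝ) ^ n * (8 / (3 * π * n)) * (1 + 1 / n) *
      ((1 + 1 / (3 * n)) * uu n + (-1 / (3 * n)) * 2 ^ n +
        1 / (9 * n ^ 2) * (2 ^ n * (3 + 3 * √n))) := by
  have hp := Real.pi_pos
  rw [numWalks_eq]
  refine (WW_le _ (fun z : ℤ => (4:ℝ) ^ n * (8 / (3 * π * n)) * (1 + 1 / n) *
     (1 * ((1 + 1 / (3 * n)) * 1 + (-1 / (3 * n)) * ((z : ℝ) + 1)) +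
      (1 / (9 * n ^ 2)) * ((z : ℝ) + 1) ^ 2)) n (fun a b h hab => QQ_hi' n a b hn h hab) n 0 0 0
    (by simp) (by simp)).trans ?_
  rw [hE_smul (fun z : ℤ => (1 * ((1 + 1 / (3 * (n:ℝ))) * 1 + (-1 / (3 * n)) * ((z : ℝ) + 1)) +
      (1 / (9 * n ^ 2)) * ((z : ℝ) + 1) ^ 2)),
    hE_lin (fun z : ℤ => (1 + 1 / (3 * (n:ℝ))) * 1 + (-1 / (3 * n)) * ((z : ℝ) + 1))
      (fun z : ℤ => ((z : ℝ) + 1) ^ 2),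
    hE_lin (fun _ => 1) (fun z : ℤ => (z:ℝ) + 1), hE_first _ _ (by norm_num)]
  have := second_le n
  have e0 : (2:ℝ) ^ n * (((0:ℤ):ℝ) + 1) = 2 ^ n := by simp
  have e1 : hE (fun _ => 1) n 0 = uu n := rfl
  rw [one_mul, e0, e1]
  gcongr

set_option maxHeartbeats 1000000 in
lemma final_bound (n : ℕ) (hn : 4 ≤ n) (r w t : ℝ) (hr : r = √n) (hw : w = √π) (ht : t = √2) :
    |(numWalks 3 SS n : ℝ) - 8 ^ n / r ^ 3 * (8 * t / (3 * w ^ 3) - 8 / (9 * π * r))|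
      ≤ 5 * 8 ^ n / r ^ 5 := by
  have hp := Real.pi_gt_three
  have hn' : (4:ℝ) ≤ n := by exact_mod_cast hn
  have hr2 : r ^ 2 = n := by rw [hr]; exact Real.sq_sqrt (by positivity)
  have hw2 : w ^ 2 = π := by rw [hw]; exact Real.sq_sqrt (by positivity)
  have ht2 : t ^ 2 = 2 := by rw [ht]; exact Real.sq_sqrt (by positivity)
  have hr0 : 0 < r := by rw [hr]; positivity
  have hw0 : 0 < w := by rw [hw]; positivity
  have ht0 : 0 < t := by rw [ht]; positivity
  have hr22 : 2 ≤ r := by nlinarith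
  have htw : t ≤ w := by rw [ht, hw]; exact Real.sqrt_le_sqrt (by linarith)
  obtain ⟨v, hv⟩ : ∃ v, v = uu n / 2 ^ n := ⟨_, rfl⟩
  have huv : uu n = 2 ^ n * v := by rw [hv]; field_simp
  have hv0 : 0 < v := by rw [hv]; have := uu_pos n; positivity
  have e4 : (4:ℝ) ^ n = 2 ^ n * 2 ^ n := by rw [← mul_pow]; norm_num
  have e8 : (8:ℝ) ^ n = 4 ^ n * 2 ^ n := by rw [← mul_pow]; norm_num
  have hhi := uu_hi n
  have hlo := uu_lo n
  rw [huv] at hhi hlo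
  have hhi' : v ^ 2 * (w ^ 2 * r ^ 2) ≤ 2 := by
    rw [hw2, hr2]
    have h : (4:ℝ) ^ n * (v ^ 2 * (π * n)) ≤ 4 ^ n * 2 := by
      refine le_trans (le_of_eq ?_) hhi; rw [e4]; ring
    exact le_of_mul_le_mul_left h (by positivity)
  have hlo' : 2 ≤ v ^ 2 * (w ^ 2 * (r ^ 2 + 2)) := by
    rw [hw2, hr2]
    have h : (4:ℝ) ^ n * 2 ≤ 4 ^ n * (v ^ 2 * (π * (n + 2))) := by
      refine le_trans hlo (le_of_eq ?_); rw [e4]; ring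
    exact le_of_mul_le_mul_left h (by positivity)
  obtain ⟨q, hq⟩ : ∃ q, q = t / (w * r) := ⟨_, rfl⟩
  have hq0 : 0 < q := by rw [hq]; positivity
  have hqr : q ≤ 1 / r := by
    rw [hq, div_le_div_iff₀ (by positivity) (by positivity)]; nlinarith
  have hq2 : q ^ 2 * (w ^ 2 * r ^ 2) = 2 := by rw [hq, div_pow, ht2]; field_simp
  have hvq : v ≤ q := by
    rw [← pow_le_pow_iff_left₀ hv0.le hq0.le two_ne_zero]
    exact le_of_mul_le_mul_right (hhi'.trans hq2.ge) (by positivity)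
  have hqv : q * (1 - 2 / r ^ 2) ≤ v := by
    have h1 : 0 ≤ 1 - 2 / r ^ 2 := by
      rw [sub_nonneg, div_le_iff₀ (by positivity)]; nlinarith
    rw [← pow_le_pow_iff_left₀ (by positivity) hv0.le two_ne_zero]
    have h2 : (q * (1 - 2 / r ^ 2)) ^ 2 * (w ^ 2 * (r ^ 2 + 2)) ≤ v ^ 2 * (w ^ 2 * (r ^ 2 + 2)) := by
      refine le_trans ?_ (hq2.le.trans hlo')
      have h3 : (1 - 2 / r ^ 2) ^ 2 * (r ^ 2 + 2) ≤ r ^ 2 := by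
        have h4 : (1 - 2 / r ^ 2) ≤ 1 := by
          have : 0 ≤ 2 / r ^ 2 := by positivity
          linarith
        have h5 : (1 - 2 / r ^ 2) * (r ^ 2 + 2) ≤ r ^ 2 := by
          have : (1 - 2 / r ^ 2) * (r ^ 2 + 2) = r ^ 2 - 4 / r ^ 2 := by field_simp; ring
          rw [this]
          have : 0 ≤ 4 / r ^ 2 := by positivity
          linarith
        calc _ = (1 - 2 / r ^ 2) * ((1 - 2 / r ^ 2) * (r ^ 2 + 2)) := by ring
          _ ≤ 1 * ((1 - 2 / r ^ 2) * (r ^ 2 + 2)) := by gcongr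
          _ ≤ _ := by linarith
      calc _ = q ^ 2 * w ^ 2 * ((1 - 2 / r ^ 2) ^ 2 * (r ^ 2 + 2)) := by ring
        _ ≤ q ^ 2 * w ^ 2 * r ^ 2 := by gcongr
        _ = _ := by ring
    exact le_of_mul_le_mul_right h2 (by positivity)
  have hSlo := S_lo n (by omega)
  have hShi := S_hi n (by omega)
  rw [huv, ← hr2] at hSlo hShi
  rw [Real.sqrt_sq hr0.le] at hShi
  obtain ⟨K, hK⟩ : ∃ K, K = (8:ℝ) ^ n * (8 / (3 * π * r ^ 2)) := ⟨_, rfl⟩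
  have hK0 : 0 < K := by rw [hK]; positivity
  have hmain : 8 ^ n / r ^ 3 * (8 * t / (3 * w ^ 3) - 8 / (9 * π * r)) = K * (q - 1 / (3 * r ^ 2)) := by
    rw [hK, hq, ← hw2]; field_simp; ring
  have hKC : K * (5 / r ^ 3) ≤ 5 * 8 ^ n / r ^ 5 := by
    have : 8 / (3 * π * r ^ 2) ≤ 1 / r ^ 2 := by
      rw [div_le_div_iff₀ (by positivity) (by positivity)]; nlinarith
    calc K * (5 / r ^ 3) ≤ 8 ^ n * (1 / r ^ 2) * (5 / r ^ 3) := by rw [hK]; gcongr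
      _ = _ := by field_simp
  obtain ⟨y, hy⟩ : ∃ y, y = 1 / r := ⟨_, rfl⟩
  have hy0 : 0 < y := by rw [hy]; positivity
  have hy1 : y ≤ 1 / 2 := by rw [hy]; exact one_div_le_one_div_of_le (by norm_num) hr22
  have e1 : 1 / (3 * r ^ 2) = y ^ 2 / 3 := by rw [hy]; field_simp
  have f1 : 7 / (3 * r ^ 2) = 7 / 3 * y ^ 2 := by rw [hy]; field_simp
  have f2 : -1 / (3 * r ^ 2) = - (y ^ 2 / 3) := by rw [hy]; field_simp
  have f3 : 1 / r ^ 2 = y ^ 2 := by rw [hy]; field_simp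
  have f4 : 1 / (9 * (r ^ 2) ^ 2) = y ^ 4 / 9 := by rw [hy]; field_simp
  have f5 : y ^ 4 / 9 * (3 + 3 * r) = (y ^ 4 + y ^ 3) / 3 := by rw [hy]; field_simp; ring
  have hlow : K * ((1 - 7 / 3 * y ^ 2) * v - y ^ 2 / 3) ≤ (numWalks 3 SS n : ℝ) := by
    refine le_trans (le_of_eq ?_) hSlo
    rw [hK, e8, f1, f2]; ring
  have hupp : (numWalks 3 SS n : ℝ) ≤
      K * ((1 + y ^ 2) * ((1 + y ^ 2 / 3) * v - y ^ 2 / 3 + (y ^ 4 + y ^ 3) / 3)) := by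
    refine le_trans hShi (le_of_eq ?_)
    rw [hK, e8, f2, f3, f4, e1]
    linear_combination ((4:ℝ) ^ n * (8 / (3 * π * r ^ 2)) * (1 + y ^ 2) * 2 ^ n) * f5
  have e2 : 5 / r ^ 3 = 5 * y ^ 3 := by rw [hy]; field_simp
  have e3 : 2 / r ^ 2 = 2 * y ^ 2 := by rw [hy]; field_simp
  rw [e3] at hqv
  rw [← hy] at hqr
  rw [hmain, e1]
  rw [e2] at hKC
  refine le_trans ?_ hKC
  have hqy : q * y ^ 2 ≤ y ^ 3 := by
    calc q * y ^ 2 ≤ y * y ^ 2 := by gcongr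
      _ = _ := by ring
  have hyy : y ^ 2 ≤ 1 / 4 := by nlinarith
  rw [abs_le]
  constructor
  · have h1 : q - y ^ 2 / 3 - 5 * y ^ 3 ≤ (1 - 7 / 3 * y ^ 2) * v - y ^ 2 / 3 := by
      have : (1 - 7 / 3 * y ^ 2) * (q * (1 - 2 * y ^ 2)) ≤ (1 - 7 / 3 * y ^ 2) * v := by
        apply mul_le_mul_of_nonneg_left hqv; linarith
      have : 0 ≤ q * y ^ 4 := by positivity
      nlinarith
    have := mul_le_mul_of_nonneg_left h1 hK0.le
    linarith
  · have h1 : (1 + y ^ 2) * ((1 + y ^ 2 / 3) * v - y ^ 2 / 3 + (y ^ 4 + y ^ 3) / 3) ≤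
        q - y ^ 2 / 3 + 5 * y ^ 3 := by
      have a1 : (1 + y ^ 2) * ((1 + y ^ 2 / 3) * v) ≤ (1 + y ^ 2) * ((1 + y ^ 2 / 3) * q) := by
        gcongr
      have a2 : q * y ^ 4 ≤ y ^ 3 / 4 := by
        calc q * y ^ 4 = q * y ^ 2 * y ^ 2 := by ring
          _ ≤ y ^ 3 * (1 / 4) := by gcongr
          _ = _ := by ring
      have a3 : y ^ 4 ≤ y ^ 3 / 2 := by
        calc y ^ 4 = y ^ 3 * y := by ring
          _ ≤ y ^ 3 * (1 / 2) := by gcongr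
          _ = _ := by ring
      have a4 : (1 + y ^ 2) * ((y ^ 4 + y ^ 3) / 3) ≤ 2 * ((y ^ 3 / 2 + y ^ 3) / 3) := by
        gcongr; linarith
      have : 0 ≤ y ^ 4 := by positivity
      have : 0 ≤ y ^ 3 := by positivity
      linarith
    have := mul_le_mul_of_nonneg_left h1 hK0.le
    linarith

lemma rpow_half (x : ℝ) (hx : 0 ≤ x) (k : ℕ) : x ^ ((k : ℝ) / 2) = √x ^ k := by
  rw [Real.sqrt_eq_rpow, ← Real.rpow_natCast, ← Real.rpow_mul hx]
  congr 1; ring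

/-- For the 3D step set `{(±1,0,-1), (0,±1,-1), (±1,±1,1)}`, the number of octant walks
satisfies `s_n = (8^n/n^{3/2})(8√2/(3π^{3/2}) − 8/(9π√n) + O(1/n))`. -/
theorem threeD_example_with_correction :
    ∃ C : ℝ, ∀ᶠ n : ℕ in atTop,
      |(numWalks 3 ({![1, 0, -1], ![-1, 0, -1], ![0, 1, -1], ![0, -1, -1],
            ![1, 1, 1], ![-1, 1, 1], ![1, -1, 1], ![-1, -1, 1]} : Finset (Fin 3 → ℤ)) n : ℝ) -
          8 ^ n / (n : ℝ) ^ ((3 : ℝ) / 2) *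
            (8 * Real.sqrt 2 / (3 * π ^ ((3 : ℝ) / 2)) - 8 / (9 * π * Real.sqrt n))|
        ≤ C * 8 ^ n / (n : ℝ) ^ ((5 : ℝ) / 2) := by
  refine ⟨5, ?_⟩
  filter_upwards [eventually_ge_atTop 4] with n hn
  have h := final_bound n hn _ _ _ rfl rfl rfl
  have h1 := rpow_half (n:ℝ) (by positivity) 3
  have h2 := rpow_half (n:ℝ) (by positivity) 5
  have h3 := rpow_half π Real.pi_pos.le 3
  push_cast at h1 h2 h3
  rw [h1, h2, h3]
  exact h

end
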